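/- Let n ≥ 1 and λ ∈ ℂ with |λ| > 1. There is no function g : EuclideanSpace ℂ (Fin n) → ℝ that is differentiable at every point z ≠ 0, satisfies g(λ • z) = g(z) for every z ≠ 0, and satisfies fderiv ℝ g z = fderiv ℝ (fun w => Real.log ‖w‖) z for every z ≠ 0. (Hence the Lee form θ = −d log ‖z‖ of the classical Hopf manifold is not exact: it admits no primitive invariant under the deck group, so the Hopf manifold is strictly LCK and its elliptic curves are not induced globally conformally Kähler.) -/

import Mathlib

/-- The Lee form `θ = −d log ‖z‖` of the classical Hopf manifold `(ℂⁿ ∖ 0)/⟨λ⟩`, `|λ| > 1`,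
is not exact: there is no primitive of `d log ‖z‖` on `ℂⁿ ∖ {0}` invariant under the deck
transformation `z ↦ λ • z`. Hence the Hopf manifold is strictly LCK and its elliptic curves
are not induced globally conformally Kähler. -/
theorem hopf_lee_form_not_exact (n : ℕ) (hn : 1 ≤ n) (lam : ℂ) (hlam : 1 < ‖lam‖) :
    ¬ ∃ g : EuclideanSpace ℂ (Fin n) → ℝ,
        (∀ z : EuclideanSpace ℂ (Fin n), z ≠ 0 → DifferentiableAt ℝ g z) ∧
        (∀ z : EuclideanSpace ℂ (Fin n), z ≠ 0 → g (lam • z) = g z) ∧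
        (∀ z : EuclideanSpace ℂ (Fin n), z ≠ 0 →
          fderiv ℝ g z = fderiv ℝ (fun w : EuclideanSpace ℂ (Fin n) => Real.log ‖w‖) z) := by
  rintro ⟨g, hd, hinv, hf⟩
  obtain ⟨v, hv⟩ : ∃ v : EuclideanSpace ℂ (Fin n), v ≠ 0 := by
    refine ⟨EuclideanSpace.single (⟨0, hn⟩ : Fin n) (1 : ℂ), fun h => ?_⟩
    have := congrArg norm h
    simp at this
  have hl0 : lam ≠ 0 := by
    rintro rfl
    norm_num at hlam
  have hlog : ∀ z : EuclideanSpace ℂ (Fin n), z ≠ 0 →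
      DifferentiableAt ℝ (fun w : EuclideanSpace ℂ (Fin n) => Real.log ‖w‖) z := by
    intro z hz
    exact (differentiableAt_id.norm ℂ hz).log (norm_ne_zero_iff.mpr hz)
  set h : EuclideanSpace ℂ (Fin n) → ℝ := fun w => g w - Real.log ‖w‖ with hh
  have hder : ∀ z, z ≠ 0 → HasFDerivAt h (0 : EuclideanSpace ℂ (Fin n) →L[ℝ] ℝ) z := by
    intro z hz
    have h1 := (hd z hz).hasFDerivAt.sub (hlog z hz).hasFDerivAt
    rw [hf z hz, sub_self] at h1
    exact h1
  let p : ℝ → EuclideanSpace ℂ (Fin n) := fun t => Complex.exp ((t : ℂ) * Complex.log lam) • v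
  have hp0 : ∀ t, p t ≠ 0 := fun t => smul_ne_zero (Complex.exp_ne_zero _) hv
  have hpd : Differentiable ℝ p := by
    have h2 : Differentiable ℝ (fun t : ℝ => Complex.exp ((t : ℂ) * Complex.log lam)) :=
      ((Complex.ofRealCLM.differentiable).mul_const _).cexp
    exact h2.smul_const v
  have hc : ∀ t, HasDerivAt (h ∘ p) 0 t := by
    intro t
    simpa using (hder (p t) (hp0 t)).comp_hasDerivAt t (hpd t).hasDerivAt
  have key := is_const_of_deriv_eq_zero (fun t => (hc t).differentiableAt)
    (fun t => (hc t).deriv) 1 0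
  have e1 : p 1 = lam • v := by simp [p, Complex.exp_log hl0]
  have e0 : p 0 = v := by simp [p]
  simp only [Function.comp, e1, e0, hh] at key
  rw [hinv v hv, norm_smul, Real.log_mul (by positivity) (norm_ne_zero_iff.mpr hv)] at key
  have := Real.log_pos hlam
  linarith
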